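/- arXiv:2005.09006 — 2 statements merged into one kernel-verified Lean document; each statement's English description precedes it below -/
import Mathlib

section
/- Let σ > 0 and let ξ be a real random variable whose law is the Gaussian measure N(0, σ²) on ℝ. Let α ∈ (0,1) and define the (1−α)-quantile q := sInf {x ∈ ℝ : ℙ(ξ ≤ x) ≥ 1 − α}. Then for all real numbers Y and Y_min, the chance constraint ℙ(Y + ξ ≥ Y_min) ≥ 1 − α holds if and only if the tightened deterministic constraint Y − q ≥ Y_min holds. -/
/-!
The law of `ξ` is symmetric, so `ℙ(Y + ξ ≥ Ymin) = ℙ(ξ ≥ -(Y - Ymin)) = ℙ(ξ ≤ Y - Ymin)`.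
It remains to compare `Y - Ymin` with the quantile. For any probability measure on `ℝ`
the quantile is the lower adjoint of the distribution function (`quantile_le_iff`): the set
`{x | p ≤ F x}` is an up-set because `F` is monotone, it is nonempty and bounded below because
`F` tends to `1` and `0` at `±∞`, and it contains its infimum because `F` is right-continuous.
-/

open MeasureTheory ProbabilityTheory
open scoped NNReal

/-- The quantile Galois connection `sInf {x | p ≤ F x} ≤ t ↔ p ≤ F t`, where `F` is the
distribution function of `ν`. The condition `0 < p < 1` ensures that the infimum is not the
junk value `0`. -/
lemma quantile_le_iff (ν : Measure ℝ) {p : ℝ} (hp0 : 0 < p) (hp1 : p < 1) (t : ℝ) :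
    sInf {x : ℝ | p ≤ cdf ν x} ≤ t ↔ p ≤ cdf ν t := by
  have hne : {x : ℝ | p ≤ cdf ν x}.Nonempty :=
    (((tendsto_cdf_atTop ν).eventually (lt_mem_nhds hp1)).exists).imp fun _ h => h.le
  have hbdd : BddBelow {x : ℝ | p ≤ cdf ν x} := by
    obtain ⟨b, hb⟩ := ((tendsto_cdf_atBot ν).eventually (gt_mem_nhds hp0)).exists
    refine ⟨b, fun x hx => ?_⟩
    by_contra! hxb
    exact absurd (hx.trans (monotone_cdf ν hxb.le)) (not_le.mpr hb)
  refine ⟨fun h => ?_, fun h => csInf_le hbdd h⟩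
  refine le_trans ?_ (monotone_cdf ν h)
  have hcont := ((cdf ν).right_continuous (sInf {x : ℝ | p ≤ cdf ν x})).mono Set.Ioi_subset_Ici_self
  refine ge_of_tendsto hcont ?_
  filter_upwards [self_mem_nhdsWithin] with x hx
  obtain ⟨s, hs, hsx⟩ := exists_lt_of_csInf_lt hne hx
  exact le_trans hs (monotone_cdf ν hsx.le)

/-- Exact Gaussian reformulation (lower-bound case) of the linearized chance
constraint `ℙ(Y + ξ ≥ Y_min) ≥ 1 − α` as the tightened deterministic
constraint `Y − q ≥ Y_min`, where `q` is the `(1−α)`-quantile of `ξ`. -/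
theorem gaussian_chance_constraint_lower
    {Ω : Type*} [MeasurableSpace Ω] (μ : Measure Ω) [IsProbabilityMeasure μ]
    (ξ : Ω → ℝ) (hξmeas : Measurable ξ)
    (σ : ℝ≥0) (hσ : 0 < σ)
    (hlaw : Measure.map ξ μ = gaussianReal 0 (σ ^ 2))
    (α : ℝ) (hα0 : 0 < α) (hα1 : α < 1)
    (q : ℝ) (hq : q = sInf {x : ℝ | μ {ω | ξ ω ≤ x} ≥ ENNReal.ofReal (1 - α)}) :
    ∀ Y Ymin : ℝ,
      μ {ω | Y + ξ ω ≥ Ymin} ≥ ENNReal.ofReal (1 - α) ↔ Y - q ≥ Ymin := by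
  intro Y Ymin
  set ν := gaussianReal 0 (σ ^ 2) with hν
  have hcdf (x : ℝ) : μ {ω | ξ ω ≤ x} = ENNReal.ofReal (cdf ν x) := by
    rw [ofReal_cdf, ← hlaw, Measure.map_apply hξmeas measurableSet_Iic]
    rfl
  have hsymm : μ {ω | Y + ξ ω ≥ Ymin} = ENNReal.ofReal (cdf ν (Y - Ymin)) := by
    have hneg : ν.map (fun x => -x) = ν := by
      rw [hν, gaussianReal_map_neg, neg_zero]
    rw [ofReal_cdf, ← hneg, Measure.map_apply measurable_neg measurableSet_Iic, ← hlaw,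
      Measure.map_apply hξmeas (measurable_neg measurableSet_Iic)]
    congr 1
    ext ω
    simp only [Set.mem_ofPred_eq, Set.mem_preimage, Set.mem_Iic]
    constructor <;> intro h <;> linarith
  have hiff (x : ℝ) :
      ENNReal.ofReal (cdf ν x) ≥ ENNReal.ofReal (1 - α) ↔ 1 - α ≤ cdf ν x :=
    ENNReal.ofReal_le_ofReal_iff (cdf_nonneg ν x)
  simp only [hcdf, hiff] at hq
  rw [hsymm, hiff, ← quantile_le_iff ν (by linarith) (by linarith), ← hq]
  constructor <;> intro h <;> linarith
end

section
/- Let α ∈ (0,1) and let q := sInf {x ∈ ℝ : (gaussianReal 0 1) (Iic x) ≥ 1 − α} be the (1−α)-quantile of the standard Gaussian measure N(0,1). Then q ≤ √((1−α)/α); that is, the distribution-free Chebyshev safety factor f⁻¹(1−α) := √((1−α)/α) is at least as large as the Gaussian safety factor at every violation probability α. -/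
/-!
The one-sided Chebyshev (Cantelli) inequality bounds the upper tail `μ [t, ∞)` of any probability
measure with mean `0` and second moment `1` by `1 / (1 + t²)`. At `t = √((1 − α) / α)` this bound
equals `α`, so `t` itself satisfies the condition `μ (Iic t) ≥ 1 − α` that defines the quantile.
Since the infimum is real-valued, one also needs the defining set to be bounded below, which holds
because the distribution function tends to `0` at `−∞`.
-/

open MeasureTheory ProbabilityTheory

/-- The one-sided Chebyshev (Cantelli) inequality for a standardized real distribution, obtained by
applying Markov's inequality to `x ↦ (t x + 1)²`, which is at least `(t² + 1)²` on `[t, ∞)`. -/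
lemma cantelli_standardized (μ : Measure ℝ) [IsProbabilityMeasure μ] (hL : MemLp id 2 μ)
    (hmean : ∫ x, x ∂μ = 0) (hsq : ∫ x, x ^ 2 ∂μ = 1) {t : ℝ} (ht : 0 ≤ t) :
    μ.real (Set.Ici t) ≤ 1 / (1 + t ^ 2) := by
  have hi1 : Integrable (fun x : ℝ => x) μ := hL.integrable (by norm_num)
  have hi2 : Integrable (fun x : ℝ => x ^ 2) μ := hL.integrable_sq
  have heq : (fun x : ℝ => (t * x + 1) ^ 2) = fun x => t ^ 2 * x ^ 2 + (2 * t * x + 1) := by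
    funext x; ring
  have hiA : Integrable (fun x : ℝ => t ^ 2 * x ^ 2) μ := hi2.const_mul _
  have hiB : Integrable (fun x : ℝ => 2 * t * x) μ := hi1.const_mul _
  have hiC : Integrable (fun _ : ℝ => (1 : ℝ)) μ := integrable_const _
  have hiBC : Integrable (fun x : ℝ => 2 * t * x + 1) μ := hiB.add hiC
  have hint : Integrable (fun x : ℝ => (t * x + 1) ^ 2) μ := by
    rw [heq]; exact hiA.add hiBC
  have hval : ∫ x, (t * x + 1) ^ 2 ∂μ = 1 + t ^ 2 := by
    rw [heq, integral_add hiA hiBC, integral_add hiB hiC, integral_const_mul,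
      integral_const_mul, hmean, hsq]
    simp
    ring
  have hmarkov := mul_meas_ge_le_integral_of_nonneg
    (Filter.Eventually.of_forall fun x : ℝ => sq_nonneg (t * x + 1)) hint ((1 + t ^ 2) ^ 2)
  have hsub : Set.Ici t ⊆ {x : ℝ | (1 + t ^ 2) ^ 2 ≤ (t * x + 1) ^ 2} := by
    intro x hx
    have hx : t ≤ x := hx
    have : 1 + t ^ 2 ≤ t * x + 1 := by nlinarith
    exact pow_le_pow_left₀ (by positivity) this 2
  have hmono : μ.real (Set.Ici t) ≤ _ := measureReal_mono hsub
  rw [hval] at hmarkov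
  have hpos : 0 < 1 + t ^ 2 := by positivity
  rw [le_div_iff₀ hpos]
  nlinarith [mul_le_mul_of_nonneg_left hmono (sq_nonneg (1 + t ^ 2))]

lemma integral_sq_gaussianReal_zero_one : ∫ x, x ^ 2 ∂(gaussianReal 0 1) = 1 := by
  have h := variance_fun_id_gaussianReal (μ := 0) (v := 1)
  rw [variance_of_integral_eq_zero (by fun_prop) integral_id_gaussianReal] at h
  simpa using h

/-- For `p > 0` the set defining the `p`-quantile is bounded below, so that its real-valued infimum
is a genuine greatest lower bound as soon as the set is nonempty. -/
lemma bddBelow_quantile_set (μ : Measure ℝ) [IsProbabilityMeasure μ] {p : ℝ} (hp : 0 < p) :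
    BddBelow {x : ℝ | μ (Set.Iic x) ≥ ENNReal.ofReal p} := by
  obtain ⟨b, hb⟩ := ((tendsto_cdf_atBot μ).eventually (gt_mem_nhds hp)).exists
  refine ⟨b, fun x hx => ?_⟩
  by_contra! hlt
  have hx : ENNReal.ofReal p ≤ μ (Set.Iic x) := hx
  rw [← ofReal_cdf, ENNReal.ofReal_le_ofReal_iff (cdf_nonneg μ x)] at hx
  linarith [monotone_cdf μ hlt.le]

/-- The distribution-free Chebyshev safety factor `√((1−α)/α)` dominates the
Gaussian safety factor: the `(1−α)`-quantile of the standard Gaussian is at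
most `√((1−α)/α)` for every violation probability `α ∈ (0,1)`. -/
theorem chebyshev_safety_factor_dominates_gaussian
    (α : ℝ) (hα0 : 0 < α) (hα1 : α < 1)
    (q : ℝ)
    (hq : q = sInf {x : ℝ | gaussianReal 0 1 (Set.Iic x) ≥ ENNReal.ofReal (1 - α)}) :
    q ≤ Real.sqrt ((1 - α) / α) := by
  rw [hq]
  refine csInf_le (bddBelow_quantile_set _ (by linarith)) ?_
  set t := Real.sqrt ((1 - α) / α) with ht
  have htsq : t ^ 2 = (1 - α) / α := Real.sq_sqrt (div_nonneg (by linarith) hα0.le)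
  have hc := cantelli_standardized (gaussianReal 0 1) (memLp_id_gaussianReal 2)
    integral_id_gaussianReal integral_sq_gaussianReal_zero_one (Real.sqrt_nonneg ((1 - α) / α))
  rw [← ht, htsq, show 1 / (1 + (1 - α) / α) = α by field_simp; ring] at hc
  have hIoi : (gaussianReal 0 1).real (Set.Ioi t) ≤ α :=
    (measureReal_mono Set.Ioi_subset_Ici_self).trans hc
  have hcompl := probReal_compl_eq_one_sub (μ := gaussianReal 0 1) (measurableSet_Iic (a := t))
  rw [Set.compl_Iic] at hcompl
  change ENNReal.ofReal (1 - α) ≤ gaussianReal 0 1 (Set.Iic t)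
  rw [← ofReal_measureReal]
  exact ENNReal.ofReal_le_ofReal (by linarith)
end
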